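/- Let m ≥ 2, let h be a smooth positive function on a neighborhood of 0 in ℝ^m, fix two distinct indices i, j ∈ {1,…,m}, and set κ = (∂²(log h)/∂x_i∂x_j)(0). Then there exists ε > 0 such that for all u, v ∈ ℝ^m with 0 < u_k < ε and −ε < v_k < 0 for every k, the following holds. For signs s, t ∈ {+,−} let V_{st} denote the integral of h over the box ∏_{k=1}^m I_k, where I_i = [0,u_i] if s = + and I_i = [v_i,0] if s = −, I_j = [0,u_j] if t = + and I_j = [v_j,0] if t = −, and I_k = [v_k,u_k] for k ∉ {i,j}. Then: if κ > 0 then V_{−+}·V_{+−} < V_{++}·V_{−−}, and if κ < 0 then V_{−+}·V_{+−} > V_{++}·V_{−−}. -/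

import Mathlib

open MeasureTheory

noncomputable section

/-- Second mixed partial derivative `∂²(log h)/∂x_i∂x_j` at `x`. -/
def logpd2 {m : ℕ} (h : (Fin m → ℝ) → ℝ) (k l : Fin m) (x : Fin m → ℝ) : ℝ :=
  fderiv ℝ (fun y => fderiv ℝ (fun z => Real.log (h z)) y (Pi.single k (1:ℝ)))
    x (Pi.single l 1)

/-- The `h`-volume `V_{st}` of the subbox of `∏_k [v_k,u_k]` determined by the signs
`s` (for coordinate `i`: `+` gives `[0,u_i]`, `−` gives `[v_i,0]`) and `t` (likewise for
coordinate `j`), the remaining factors being `[v_k,u_k]`. -/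
def boxVol {m : ℕ} (h : (Fin m → ℝ) → ℝ) (i j : Fin m) (u v : Fin m → ℝ)
    (s t : Bool) : ℝ :=
  ∫ x in Set.Icc
      (fun k => if k = i then (if s then 0 else v i)
        else if k = j then (if t then 0 else v j) else v k)
      (fun k => if k = i then (if s then u i else 0)
        else if k = j then (if t then u j else 0) else u k),
    h x

/-!
Parametrizing the four subboxes affinely by the unit cube, `V_{st}` is the product of the side
lengths times the average `M_{st}` of `h`, and the products of side lengths for `++`, `--` and for
`-+`, `+-` agree. So the sign of `V_{++} V_{--} - V_{-+} V_{+-}` is that of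
`M_{--} (M_{++} - M_{+-} - M_{-+} + M_{--}) - (M_{+-} - M_{--}) (M_{-+} - M_{--})`.
The points of the four subboxes with the same parameter `y` differ by shifts `α(y_i)` and `β(y_j)`
in the coordinates `i` and `j`, so to leading order the second difference is `∂_i ∂_j h(0)` times
the mean of `α β`, which is the product of the means of `α` and `β` because `i ≠ j`, and the first
differences are `∂_i h(0)` times the mean of `α` and `∂_j h(0)` times the mean of `β`. Hence the
expression is asymptotic to `(h ∂_i ∂_j h - ∂_i h ∂_j h)(0) = h(0)² κ` times the product of the
means. All error terms are little-o of that product, uniformly in the shape of the box, because the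
differences are controlled by strict differentiability of `h` and of its derivative at `0`.
-/

open Asymptotics Filter Topology

section SecondDifference

variable {E F : Type*} [NormedAddCommGroup E] [NormedSpace ℝ E]
  [NormedAddCommGroup F] [NormedSpace ℝ F]

theorem eventually_continuousAt_of_contDiffAt {f : E → F} {x : E} {n : WithTop ℕ∞}
    (hf : ContDiffAt ℝ n f x) : ∀ᶠ y in 𝓝 x, ContinuousAt f y :=
  ((hf.of_le zero_le).eventually (by simp)).mono fun _ hy => hy.continuousAt

theorem norm_second_difference_sub_le {f : E → F} {φ : E →L[ℝ] E →L[ℝ] F} {s : Set E} {C : ℝ}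
    (hs : Convex ℝ s) (hf : ∀ y ∈ s, DifferentiableAt ℝ f y)
    (hφ : ∀ y ∈ s, ∀ z ∈ s, ‖fderiv ℝ f y - fderiv ℝ f z - φ (y - z)‖ ≤ C * ‖y - z‖)
    {p a b : E} (hp : p ∈ s) (hpa : p + a ∈ s) (hpb : p + b ∈ s) (hpab : p + a + b ∈ s) :
    ‖f (p + a + b) - f (p + a) - f (p + b) + f p - φ b a‖ ≤ C * ‖b‖ * ‖a‖ := by
  have hconv : Convex ℝ (s ∩ (fun y => y + b) ⁻¹' s) := hs.inter (hs.translate_preimage_left b)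
  have hderiv : ∀ y ∈ s ∩ (fun y => y + b) ⁻¹' s,
      HasFDerivWithinAt (fun y => f (y + b) - f y) (fderiv ℝ f (y + b) - fderiv ℝ f y)
        (s ∩ (fun y => y + b) ⁻¹' s) y := fun y hy =>
    (((hasFDerivAt_comp_add_right b).2 (hf _ hy.2).hasFDerivAt).sub
      (hf y hy.1).hasFDerivAt).hasFDerivWithinAt
  have hbound : ∀ y ∈ s ∩ (fun y => y + b) ⁻¹' s,
      ‖fderiv ℝ f (y + b) - fderiv ℝ f y - φ b‖ ≤ C * ‖b‖ := fun y hy => by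
    simpa only [add_sub_cancel_left] using hφ _ hy.2 y hy.1
  convert! hconv.norm_image_sub_le_of_norm_hasFDerivWithin_le' hderiv hbound
    ⟨hp, hpb⟩ ⟨hpa, hpab⟩ using 2
  · rw [add_sub_cancel_left]
    abel
  · rw [add_sub_cancel_left]

theorem isLittleO_second_difference {f : E → F} {x : E} (hf : ContDiffAt ℝ 2 f x) :
    (fun z : E × E × E => f (z.1 + z.2.1 + z.2.2) - f (z.1 + z.2.1) - f (z.1 + z.2.2) + f z.1 -
        fderiv ℝ (fderiv ℝ f) x z.2.2 z.2.1)
      =o[𝓝 (x, 0, 0)] fun z => ‖z.2.2‖ * ‖z.2.1‖ := by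
  refine isLittleO_iff.2 fun c hc => ?_
  have hstrict : HasStrictFDerivAt (fderiv ℝ f) (fderiv ℝ (fderiv ℝ f) x) x :=
    (hf.fderiv_right (m := 1) (by norm_num)).hasStrictFDerivAt one_ne_zero
  have hdiff : ∀ᶠ y in 𝓝 x, DifferentiableAt ℝ f y :=
    (hf.eventually (by simp)).mono fun y hy => hy.differentiableAt two_ne_zero
  obtain ⟨r, hr, hball⟩ := Metric.eventually_nhds_iff_ball.1
    ((continuousAt_fst.eventually hdiff).and (hstrict.isLittleO.def hc))
  have hmem : ∀ y ∈ Metric.ball x r, ∀ z ∈ Metric.ball x r, (y, z) ∈ Metric.ball (x, x) r :=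
    fun y hy z hz => by rw [← ball_prod_same]; exact ⟨hy, hz⟩
  have hnear : ∀ g : E × E × E → E, Continuous g → g (x, 0, 0) = x →
      ∀ᶠ z in 𝓝 (x, 0, 0), g z ∈ Metric.ball x r := fun g hg hgx =>
    hg.continuousAt.eventually_mem (by simpa only [hgx] using Metric.ball_mem_nhds x hr)
  filter_upwards [hnear (fun z => z.1) (by fun_prop) rfl,
    hnear (fun z => z.1 + z.2.1) (by fun_prop) (by simp),
    hnear (fun z => z.1 + z.2.2) (by fun_prop) (by simp),
    hnear (fun z => z.1 + z.2.1 + z.2.2) (by fun_prop) (by simp)] with z hp hpa hpb hpab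
  simpa only [norm_mul, norm_norm, mul_assoc] using
    norm_second_difference_sub_le (convex_ball x r) (fun y hy => (hball _ (hmem y hy y hy)).1)
      (fun y hy z hz => (hball _ (hmem y hy z hz)).2) hp hpa hpb hpab

theorem isLittleO_first_difference_smul {α : Type*} {l : Filter α} {f : E → F} {x e : E}
    {p : α → E} {a : α → ℝ} (hf : ContDiffAt ℝ 1 f x) (hp : Tendsto p l (𝓝 x))
    (ha : Tendsto a l (𝓝 0)) :
    (fun z => f (p z + a z • e) - f (p z) - a z • fderiv ℝ f x e) =o[l] a := by
  have hlim : Tendsto (fun z => (p z + a z • e, p z)) l (𝓝 (x, x)) := by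
    simpa only [zero_smul, add_zero] using (hp.add (ha.smul_const e)).prodMk_nhds hp
  refine (((hf.hasStrictFDerivAt one_ne_zero).isLittleO.comp_tendsto hlim).congr_left
    fun z => ?_).trans_isBigO (IsBigO.of_bound ‖e‖ (Eventually.of_forall fun z => le_of_eq ?_))
  · simp only [Function.comp_apply, add_sub_cancel_left, map_smul]
  · simp only [Function.comp_apply, add_sub_cancel_left, norm_smul, mul_comm]

theorem isLittleO_second_difference_smul {α : Type*} {l : Filter α} {f : E → F} {x e e' : E}
    {p : α → E} {a b : α → ℝ} (hf : ContDiffAt ℝ 2 f x) (hp : Tendsto p l (𝓝 x))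
    (ha : Tendsto a l (𝓝 0)) (hb : Tendsto b l (𝓝 0)) :
    (fun z => f (p z + a z • e + b z • e') - f (p z + a z • e) - f (p z + b z • e') + f (p z) -
        (a z * b z) • fderiv ℝ (fderiv ℝ f) x e' e)
      =o[l] fun z => a z * b z := by
  have hlim : Tendsto (fun z => (p z, a z • e, b z • e')) l (𝓝 (x, 0, 0)) := by
    simpa only [zero_smul] using
      hp.prodMk_nhds ((ha.smul_const e).prodMk_nhds (hb.smul_const e'))
  refine (((isLittleO_second_difference hf).comp_tendsto hlim).congr_left fun z => ?_).trans_isBigO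
    (IsBigO.of_bound (‖e'‖ * ‖e‖) (Eventually.of_forall fun z => le_of_eq ?_))
  · simp only [Function.comp_apply, map_smul, smul_apply, smul_smul]
  · simp only [Function.comp_apply, norm_mul, norm_norm, norm_smul]
    ring

theorem fderiv_fderiv_log_apply {f : E → ℝ} {x : E} (hf : ContDiffAt ℝ 2 f x) (hx : f x ≠ 0)
    (v w : E) :
    f x ^ 2 * fderiv ℝ (fun y => fderiv ℝ (fun z => Real.log (f z)) y v) x w =
      f x * fderiv ℝ (fderiv ℝ f) x w v - fderiv ℝ f x v * fderiv ℝ f x w := by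
  have hlog : (fun y => fderiv ℝ (fun z => Real.log (f z)) y v) =ᶠ[𝓝 x]
      fun y => (f y)⁻¹ * fderiv ℝ f y v := by
    filter_upwards [hf.eventually (by simp), hf.continuousAt.eventually_ne hx] with y hy hy0
    rw [fderiv.log (hy.differentiableAt two_ne_zero) hy0, smul_apply, smul_eq_mul]
  have hinv : HasFDerivAt (fun y => (f y)⁻¹) (-(f x ^ 2)⁻¹ • fderiv ℝ f x) x :=
    (hasDerivAt_inv hx).comp_hasFDerivAt x (hf.differentiableAt two_ne_zero).hasFDerivAt
  have hdf : HasFDerivAt (fun y => fderiv ℝ f y v) ((fderiv ℝ (fderiv ℝ f) x).flip v) x :=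
    ((hf.fderiv_right (m := 1) (by norm_num)).differentiableAt one_ne_zero).hasFDerivAt.clm_apply
      (hasFDerivAt_const v x) |>.congr_fderiv (by ext; simp)
  rw [hlog.fderiv_eq, (hinv.fun_mul hdf).fderiv]
  simp only [add_apply, smul_apply, ContinuousLinearMap.flip_apply, smul_eq_mul]
  field_simp
  ring

end SecondDifference

theorem isLittleO_mul_sub_mul {α 𝕜 : Type*} [NormedField 𝕜] {l : Filter α} {f g u v : α → 𝕜}
    {a b : 𝕜}
    (hf : (fun x => f x - a * u x) =o[l] u) (hg : (fun x => g x - b * v x) =o[l] v) :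
    (fun x => f x * g x - a * b * (u x * v x)) =o[l] fun x => u x * v x := by
  have hgO : g =O[l] v :=
    (hg.isBigO.add (isBigO_const_mul_self b v l)).congr_left fun x => sub_add_cancel _ _
  refine ((hf.mul_isBigO hgO).add ((isBigO_const_mul_self a u l).mul_isLittleO hg)).congr_left
    fun x => ?_
  ring

theorem eventually_pos_of_isLittleO {α : Type*} {l : Filter α} {f u : α → ℝ} {c : ℝ}
    (hfu : (fun x => f x - c * u x) =o[l] u) (hu : ∀ᶠ x in l, 0 < u x) (hc : 0 < c) :
    ∀ᶠ x in l, 0 < f x := by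
  filter_upwards [hfu.def (half_pos hc), hu] with x hx hux
  rw [Real.norm_eq_abs, Real.norm_of_nonneg hux.le] at hx
  nlinarith [(abs_le.1 hx).1, mul_pos hc hux]

theorem eventually_neg_of_isLittleO {α : Type*} {l : Filter α} {f u : α → ℝ} {c : ℝ}
    (hfu : (fun x => f x - c * u x) =o[l] u) (hu : ∀ᶠ x in l, 0 < u x) (hc : c < 0) :
    ∀ᶠ x in l, f x < 0 := by
  have hneg : (fun x => -f x - -c * u x) =o[l] u := hfu.neg_left.congr_left fun x => by ring
  exact (eventually_pos_of_isLittleO hneg hu (neg_pos.2 hc)).mono fun x => neg_pos.1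

section Integral

variable {Q Ω E F : Type*} [TopologicalSpace Q] [TopologicalSpace Ω] [MeasurableSpace Ω]
  [NormedAddCommGroup F] [NormedSpace ℝ F] {μ : Measure Ω} {K : Set Ω} {S : Set Q} {q₀ : Q}

theorem isLittleO_setIntegral (hK : IsCompact K) (hKm : MeasurableSet K) {f : Q × Ω → F}
    {w : Q × Ω → ℝ} (hfw : ∀ ω ∈ K, f =o[𝓝 (q₀, ω)] w)
    (hw : ∀ q ∈ S, ∀ ω ∈ K, 0 ≤ w (q, ω)) (hwi : ∀ q ∈ S, IntegrableOn (fun ω => w (q, ω)) K μ) :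
    (fun q => ∫ ω in K, f (q, ω) ∂μ) =o[𝓝[S] q₀] fun q => ∫ ω in K, w (q, ω) ∂μ := by
  refine isLittleO_iff.2 fun c hc => ?_
  have hbound : ∀ᶠ q in 𝓝 q₀, ∀ ω ∈ K, ‖f (q, ω)‖ ≤ c * ‖w (q, ω)‖ :=
    hK.eventually_forall_of_forall_eventually fun ω hω => (hfw ω hω).def hc
  filter_upwards [nhdsWithin_le_nhds hbound, self_mem_nhdsWithin] with q hq hqS
  have hle : ∀ᵐ ω ∂μ.restrict K, ‖f (q, ω)‖ ≤ c * w (q, ω) :=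
    (ae_restrict_mem hKm).mono fun ω hω => by
      simpa only [Real.norm_of_nonneg (hw q hqS ω hω)] using hq ω hω
  rw [Real.norm_of_nonneg (setIntegral_nonneg hKm (hw q hqS)), ← integral_const_mul]
  exact norm_integral_le_of_norm_le ((hwi q hqS).const_mul c) hle

theorem eventually_integrableOn_comp {F : Type*} [NormedAddCommGroup F] [TopologicalSpace E]
    [OpensMeasurableSpace Ω] [IsFiniteMeasureOnCompacts μ] (hK : IsCompact K)
    (hKm : MeasurableSet K) {f : E → F} {x : E} (hf : ∀ᶠ y in 𝓝 x, ContinuousAt f y)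
    {p : Q × Ω → E} (hp : Continuous p) (hp₀ : ∀ ω ∈ K, p (q₀, ω) = x) :
    ∀ᶠ q in 𝓝 q₀, IntegrableOn (fun ω => f (p (q, ω))) K μ := by
  have hcont : ∀ᶠ q in 𝓝 q₀, ∀ ω ∈ K, ContinuousAt f (p (q, ω)) :=
    hK.eventually_forall_of_forall_eventually fun ω hω =>
      hp.continuousAt.eventually (by simpa only [hp₀ ω hω] using hf)
  filter_upwards [hcont] with q hq
  exact ContinuousOn.integrableOn_compact' hK hKm fun ω hω =>
    (ContinuousAt.comp (f := fun ω => p (q, ω)) (hq ω hω) (by fun_prop)).continuousWithinAt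

theorem isLittleO_setIntegral_sub_const [TopologicalSpace E] [OpensMeasurableSpace Ω]
    [IsFiniteMeasureOnCompacts μ] [CompleteSpace F] {f : E → F} {x : E} {p : Q × Ω → E}
    (hK : IsCompact K) (hKm : MeasurableSet K)
    (hμK : μ.real K = 1) (hf : ∀ᶠ y in 𝓝 x, ContinuousAt f y)
    (hp : Continuous p) (hp₀ : ∀ ω ∈ K, p (q₀, ω) = x) :
    (fun q => (∫ ω in K, f (p (q, ω)) ∂μ) - f x) =o[𝓝[S] q₀] fun _ => (1 : ℝ) := by
  have hlocal : ∀ ω ∈ K, (fun z : Q × Ω => f (p z) - f x) =o[𝓝 (q₀, ω)]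
      fun _ => (1 : ℝ) := fun ω hω =>
    (isLittleO_one_iff ℝ).2 (tendsto_sub_nhds_zero_iff.2
      (hf.self_of_nhds.tendsto.comp (hp.tendsto' _ _ (hp₀ ω hω))))
  refine (isLittleO_setIntegral hK hKm hlocal (fun _ _ _ _ => zero_le_one)
    fun _ _ => integrableOn_const (μ := μ) hK.measure_ne_top).congr' ?_ (by simp [hμK])
  filter_upwards [nhdsWithin_le_nhds (eventually_integrableOn_comp (μ := μ) hK hKm hf hp hp₀)]
    with q hq
  rw [integral_sub hq (integrableOn_const hK.measure_ne_top), setIntegral_const, hμK, one_smul]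

variable [CompleteSpace F] [NormedAddCommGroup E] [NormedSpace ℝ E] [OpensMeasurableSpace Ω]
  [IsFiniteMeasureOnCompacts μ] {f : E → F} {x e e' : E} {p : Q × Ω → E} {a b : Q × Ω → ℝ}

theorem isLittleO_setIntegral_first_difference (hK : IsCompact K) (hKm : MeasurableSet K)
    (hf : ContDiffAt ℝ 1 f x)
    (hp : Continuous p) (hp₀ : ∀ ω ∈ K, p (q₀, ω) = x)
    (ha : Continuous a) (ha₀ : ∀ ω ∈ K, a (q₀, ω) = 0)
    (ha_nonneg : ∀ q ∈ S, ∀ ω ∈ K, 0 ≤ a (q, ω)) :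
    (fun q => (∫ ω in K, f (p (q, ω) + a (q, ω) • e) ∂μ) - (∫ ω in K, f (p (q, ω)) ∂μ) -
        (∫ ω in K, a (q, ω) ∂μ) • fderiv ℝ f x e)
      =o[𝓝[S] q₀] fun q => ∫ ω in K, a (q, ω) ∂μ := by
  have ha_int : ∀ q, IntegrableOn (fun ω => a (q, ω)) K μ := fun q =>
    ContinuousOn.integrableOn_compact' hK hKm (by fun_prop)
  have hint : ∀ g : Q × Ω → E, Continuous g → (∀ ω ∈ K, g (q₀, ω) = x) →
      ∀ᶠ q in 𝓝[S] q₀, IntegrableOn (fun ω => f (g (q, ω))) K μ := fun g hg hg₀ =>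
    nhdsWithin_le_nhds (eventually_integrableOn_comp hK hKm
      (eventually_continuousAt_of_contDiffAt hf) hg hg₀)
  refine (isLittleO_setIntegral hK hKm (fun ω hω => isLittleO_first_difference_smul (e := e) hf
    (hp.tendsto' _ _ (hp₀ ω hω)) (ha.tendsto' _ _ (ha₀ ω hω))) ha_nonneg
    fun q _ => ha_int q).congr' ?_ .rfl
  filter_upwards [hint p hp hp₀, hint (fun z => p z + a z • e) (by fun_prop)
    fun ω hω => by simp [hp₀ ω hω, ha₀ ω hω]] with q h₀ h₁
  rw [integral_sub (h₁.fun_sub h₀) ((ha_int q).smul_const _), integral_sub h₁ h₀,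
    integral_smul_const]

theorem isLittleO_setIntegral_second_difference (hK : IsCompact K) (hKm : MeasurableSet K)
    (hf : ContDiffAt ℝ 2 f x)
    (hp : Continuous p) (hp₀ : ∀ ω ∈ K, p (q₀, ω) = x)
    (ha : Continuous a) (ha₀ : ∀ ω ∈ K, a (q₀, ω) = 0)
    (hb : Continuous b) (hb₀ : ∀ ω ∈ K, b (q₀, ω) = 0)
    (hab_nonneg : ∀ q ∈ S, ∀ ω ∈ K, 0 ≤ a (q, ω) * b (q, ω)) :
    (fun q => (∫ ω in K, f (p (q, ω) + a (q, ω) • e + b (q, ω) • e') ∂μ) -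
        (∫ ω in K, f (p (q, ω) + a (q, ω) • e) ∂μ) - (∫ ω in K, f (p (q, ω) + b (q, ω) • e') ∂μ) +
        (∫ ω in K, f (p (q, ω)) ∂μ) -
        (∫ ω in K, a (q, ω) * b (q, ω) ∂μ) • fderiv ℝ (fderiv ℝ f) x e' e)
      =o[𝓝[S] q₀] fun q => ∫ ω in K, a (q, ω) * b (q, ω) ∂μ := by
  have hab_int : ∀ q, IntegrableOn (fun ω => a (q, ω) * b (q, ω)) K μ := fun q =>
    ContinuousOn.integrableOn_compact' hK hKm (by fun_prop)
  have hint : ∀ g : Q × Ω → E, Continuous g → (∀ ω ∈ K, g (q₀, ω) = x) →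
      ∀ᶠ q in 𝓝[S] q₀, IntegrableOn (fun ω => f (g (q, ω))) K μ := fun g hg hg₀ =>
    nhdsWithin_le_nhds (eventually_integrableOn_comp hK hKm
      (eventually_continuousAt_of_contDiffAt hf) hg hg₀)
  refine (isLittleO_setIntegral hK hKm (fun ω hω => isLittleO_second_difference_smul
    (e := e) (e' := e') hf (hp.tendsto' _ _ (hp₀ ω hω)) (ha.tendsto' _ _ (ha₀ ω hω))
    (hb.tendsto' _ _ (hb₀ ω hω))) hab_nonneg fun q _ => hab_int q).congr' ?_ .rfl
  filter_upwards [hint p hp hp₀,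
    hint (fun z => p z + a z • e) (by fun_prop) (fun ω hω => by simp [hp₀ ω hω, ha₀ ω hω]),
    hint (fun z => p z + b z • e') (by fun_prop) (fun ω hω => by simp [hp₀ ω hω, hb₀ ω hω]),
    hint (fun z => p z + a z • e + b z • e') (by fun_prop)
      (fun ω hω => by simp [hp₀ ω hω, ha₀ ω hω, hb₀ ω hω])] with q h₀₀ h₁₀ h₀₁ h₁₁
  rw [integral_sub (((h₁₁.fun_sub h₁₀).fun_sub h₀₁).fun_add h₀₀) ((hab_int q).smul_const _),
    integral_add ((h₁₁.fun_sub h₁₀).fun_sub h₀₁) h₀₀, integral_sub (h₁₁.fun_sub h₁₀) h₀₁,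
    integral_sub h₁₁ h₁₀, integral_smul_const]

theorem isLittleO_setIntegral_det {f : E → ℝ} (hK : IsCompact K) (hKm : MeasurableSet K)
    (hμK : μ.real K = 1) (hf : ContDiffAt ℝ 2 f x)
    (hp : Continuous p) (hp₀ : ∀ ω ∈ K, p (q₀, ω) = x)
    (ha : Continuous a) (ha₀ : ∀ ω ∈ K, a (q₀, ω) = 0)
    (ha_nonneg : ∀ q ∈ S, ∀ ω ∈ K, 0 ≤ a (q, ω))
    (hb : Continuous b) (hb₀ : ∀ ω ∈ K, b (q₀, ω) = 0)
    (hb_nonneg : ∀ q ∈ S, ∀ ω ∈ K, 0 ≤ b (q, ω))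
    (hab : ∀ q, ∫ ω in K, a (q, ω) * b (q, ω) ∂μ =
      (∫ ω in K, a (q, ω) ∂μ) * ∫ ω in K, b (q, ω) ∂μ) :
    (fun q =>
        (∫ ω in K, f (p (q, ω) + a (q, ω) • e + b (q, ω) • e') ∂μ) * (∫ ω in K, f (p (q, ω)) ∂μ) -
        (∫ ω in K, f (p (q, ω) + b (q, ω) • e') ∂μ) * (∫ ω in K, f (p (q, ω) + a (q, ω) • e) ∂μ) -
        (f x * fderiv ℝ (fderiv ℝ f) x e' e - fderiv ℝ f x e * fderiv ℝ f x e') *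
          ((∫ ω in K, a (q, ω) ∂μ) * ∫ ω in K, b (q, ω) ∂μ))
      =o[𝓝[S] q₀] fun q => (∫ ω in K, a (q, ω) ∂μ) * ∫ ω in K, b (q, ω) ∂μ := by
  have hf₁ : ContDiffAt ℝ 1 f x := hf.of_le one_le_two
  have hmean := isLittleO_setIntegral_sub_const (μ := μ) (S := S) hK hKm hμK
    (eventually_continuousAt_of_contDiffAt hf) hp hp₀
  have hsecond := isLittleO_setIntegral_second_difference (e := e) (e' := e') (μ := μ) hK hKm hf
    hp hp₀ ha ha₀ hb hb₀ fun q hq ω hω => mul_nonneg (ha_nonneg q hq ω hω) (hb_nonneg q hq ω hω)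
  have hfirst_a := isLittleO_setIntegral_first_difference (e := e) (μ := μ) hK hKm hf₁ hp hp₀
    ha ha₀ ha_nonneg
  have hfirst_b := isLittleO_setIntegral_first_difference (e := e') (μ := μ) hK hKm hf₁ hp hp₀
    hb hb₀ hb_nonneg
  simp only [hab, smul_eq_mul, mul_comm _ (fderiv ℝ (fderiv ℝ f) x e' e)] at hsecond
  simp only [smul_eq_mul, mul_comm _ (fderiv ℝ f x _)] at hfirst_a hfirst_b
  have hdiag := isLittleO_mul_sub_mul (hmean.congr_left fun q => by rw [mul_one]) hsecond
  simp only [one_mul] at hdiag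
  refine (hdiag.sub (isLittleO_mul_sub_mul hfirst_a hfirst_b)).congr_left fun q => ?_
  ring

end Integral

section UnitCube

variable {ι : Type*}

/-- The coordinatewise affine parametrization of the box `∏_k [a_k,b_k]` by the unit cube, which
turns integrals over boxes of varying size into integrals over a fixed domain. -/
def boxParam (a b y : ι → ℝ) : ι → ℝ := fun k => (b k - a k) * y k + a k

theorem boxParam_image_unitCube {a b : ι → ℝ} (hab : ∀ k, a k < b k) :
    boxParam a b '' Set.Icc 0 1 = Set.Icc a b := by
  rw [← Set.pi_univ_Icc, ← Set.pi_univ_Icc]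
  refine (Set.piMap_image_univ_pi (fun k y => (b k - a k) * y + a k) _).trans ?_
  congr! 2 with k
  rw [Set.image_affine_Icc' (sub_pos.2 (hab k))]
  simp

theorem boxParam_injective {a b : ι → ℝ} (hab : ∀ k, a k < b k) :
    Function.Injective (boxParam a b) := fun y z hyz => by
  ext k
  exact mul_left_cancel₀ (sub_pos.2 (hab k)).ne' (add_right_cancel (congrFun hyz k))

variable [Fintype ι]

theorem hasFDerivAt_boxParam [DecidableEq ι] (a b y : ι → ℝ) :
    HasFDerivAt (boxParam a b)
      (Matrix.toLin' (Matrix.diagonal (b - a))).toContinuousLinearMap y := by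
  refine ((ContinuousLinearMap.hasFDerivAt _).add_const a).congr_of_eventuallyEq
    (Eventually.of_forall fun z => ?_)
  ext k
  simp [boxParam, Matrix.mulVec_diagonal]

theorem setIntegral_Icc_eq_prod_smul {E : Type*} [NormedAddCommGroup E] [NormedSpace ℝ E]
    {a b : ι → ℝ} (hab : ∀ k, a k < b k) (f : (ι → ℝ) → E) :
    ∫ x in Set.Icc a b, f x = (∏ k, (b k - a k)) • ∫ y in Set.Icc 0 1, f (boxParam a b y) := by
  classical
  rw [← boxParam_image_unitCube hab, integral_image_eq_integral_abs_det_fderiv_smul volume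
    measurableSet_Icc (fun y _ => (hasFDerivAt_boxParam a b y).hasFDerivWithinAt)
    (boxParam_injective hab).injOn f, ← integral_smul]
  have hpos : 0 < ∏ k, (b k - a k) := Finset.prod_pos fun k _ => sub_pos.2 (hab k)
  simp [Matrix.det_diagonal, abs_of_pos hpos]

theorem volume_restrict_unitCube :
    (volume : Measure (ι → ℝ)).restrict (Set.Icc 0 1) =
      Measure.pi fun _ => volume.restrict (Set.Icc 0 1) := by
  rw [← Set.pi_univ_Icc, volume_pi, Measure.restrict_pi_pi]
  rfl

theorem isProbabilityMeasure_restrict_Icc_zero_one :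
    IsProbabilityMeasure ((volume : Measure ℝ).restrict (Set.Icc 0 1)) := ⟨by simp⟩

theorem setIntegral_unitCube_comp_eval {E : Type*} [NormedAddCommGroup E] [NormedSpace ℝ E] (i : ι)
    {f : ℝ → E} (hf : Continuous f) :
    ∫ y in Set.Icc (0 : ι → ℝ) 1, f (y i) = ∫ t in Set.Icc 0 1, f t := by
  have := isProbabilityMeasure_restrict_Icc_zero_one
  rw [volume_restrict_unitCube, integral_comp_eval hf.aestronglyMeasurable]

theorem setIntegral_unitCube_mul {i j : ι} (hij : i ≠ j) {f g : ℝ → ℝ} (hf : Continuous f)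
    (hg : Continuous g) :
    ∫ y in Set.Icc (0 : ι → ℝ) 1, f (y i) * g (y j) =
      (∫ y in Set.Icc (0 : ι → ℝ) 1, f (y i)) * ∫ y in Set.Icc (0 : ι → ℝ) 1, g (y j) := by
  have := isProbabilityMeasure_restrict_Icc_zero_one
  rw [volume_restrict_unitCube]
  have hindep := (ProbabilityTheory.iIndepFun_pi
    (μ := fun _ : ι => (volume : Measure ℝ).restrict (Set.Icc 0 1))
    (X := fun _ t => t) fun _ => aemeasurable_id).indepFun hij
  exact hindep.integral_fun_comp_mul_comp (measurable_pi_apply i).aemeasurable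
    (measurable_pi_apply j).aemeasurable hf.aestronglyMeasurable hg.aestronglyMeasurable

end UnitCube

section Subbox

variable {m : ℕ} {i j : Fin m} {u v : Fin m → ℝ} {q : (Fin m → ℝ) × (Fin m → ℝ)}
  {h : (Fin m → ℝ) → ℝ}

/-- The lower corner of the subbox of `∏_k [v_k,u_k]` with signs `s` (coordinate `i`) and `t`
(coordinate `j`), so that `boxVol h i j u v s t` is the integral of `h` over
`[boxLower i j v s t, boxUpper i j u s t]`; `true` stands for `+`. -/
def boxLower (i j : Fin m) (v : Fin m → ℝ) (s t : Bool) : Fin m → ℝ := fun k =>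
  if k = i then (if s then 0 else v i) else if k = j then (if t then 0 else v j) else v k

/-- The upper corner of the subbox of `∏_k [v_k,u_k]` with signs `s` (coordinate `i`) and `t`
(coordinate `j`), so that `boxVol h i j u v s t` is the integral of `h` over
`[boxLower i j v s t, boxUpper i j u s t]`; `true` stands for `+`. -/
def boxUpper (i j : Fin m) (u : Fin m → ℝ) (s t : Bool) : Fin m → ℝ := fun k =>
  if k = i then (if s then u i else 0) else if k = j then (if t then u j else 0) else u k

/-- The average of `h` over the subbox with signs `s`, `t`, written as an integral over the unit
cube so that the averages over the four subboxes can be compared pointwise. -/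
def boxMean (h : (Fin m → ℝ) → ℝ) (i j : Fin m) (u v : Fin m → ℝ) (s t : Bool) : ℝ :=
  ∫ y in Set.Icc 0 1, h (boxParam (boxLower i j v s t) (boxUpper i j u s t) y)

/-- The pairs `(u, v)` of opposite corners of boxes `∏_k [v_k,u_k]` around `0`: the parameter space
of the asymptotics, the box shrinking to `0` as `(u, v) → 0`. -/
def cornerPairs (ι : Type*) : Set ((ι → ℝ) × (ι → ℝ)) :=
  {q | (∀ k, 0 < q.1 k) ∧ ∀ k, q.2 k < 0}

/-- The distance, along coordinate `k`, between the points of `[v_k,0]` and of `[0,u_k]` with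
parameter `y_k` in the affine parametrizations by `[0,1]`; the argument is `z = ((u, v), y)`. -/
def boxShift (k : Fin m) (z : ((Fin m → ℝ) × (Fin m → ℝ)) × (Fin m → ℝ)) : ℝ :=
  z.1.1 k * z.2 k - z.1.2 k * (1 - z.2 k)

theorem boxLower_lt_boxUpper (hq : (u, v) ∈ cornerPairs (Fin m)) (s t : Bool) (k : Fin m) :
    boxLower i j v s t k < boxUpper i j u s t k := by
  have hu := hq.1 k
  have hv := hq.2 k
  grind [boxLower, boxUpper]

theorem boxVol_eq_prod_mul_boxMean (hq : (u, v) ∈ cornerPairs (Fin m)) (s t : Bool) :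
    boxVol h i j u v s t =
      (∏ k, (boxUpper i j u s t k - boxLower i j v s t k)) * boxMean h i j u v s t :=
  setIntegral_Icc_eq_prod_smul (boxLower_lt_boxUpper hq s t) h

theorem prod_boxUpper_sub_boxLower_mul (i j : Fin m) (u v : Fin m → ℝ) :
    (∏ k, (boxUpper i j u false true k - boxLower i j v false true k)) *
        ∏ k, (boxUpper i j u true false k - boxLower i j v true false k) =
      (∏ k, (boxUpper i j u true true k - boxLower i j v true true k)) *
        ∏ k, (boxUpper i j u false false k - boxLower i j v false false k) := by
  simp only [← Finset.prod_mul_distrib]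
  refine Finset.prod_congr rfl fun k _ => ?_
  simp only [boxLower, boxUpper, if_true, Bool.false_eq_true, if_false]
  split_ifs <;> ring

theorem exists_boxVol_det_eq_mul_boxMean_det (i j : Fin m) (h : (Fin m → ℝ) → ℝ)
    (hq : (u, v) ∈ cornerPairs (Fin m)) :
    ∃ w > 0, boxVol h i j u v true true * boxVol h i j u v false false -
        boxVol h i j u v false true * boxVol h i j u v true false =
      w * (boxMean h i j u v true true * boxMean h i j u v false false -
        boxMean h i j u v false true * boxMean h i j u v true false) := by
  have hpos : ∀ s t, 0 < ∏ k, (boxUpper i j u s t k - boxLower i j v s t k) := fun s t =>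
    Finset.prod_pos fun k _ => sub_pos.2 (boxLower_lt_boxUpper hq s t k)
  refine ⟨_, mul_pos (hpos true true) (hpos false false), ?_⟩
  simp only [boxVol_eq_prod_mul_boxMean hq]
  linear_combination -(boxMean h i j u v false true * boxMean h i j u v true false) *
    prod_boxUpper_sub_boxLower_mul i j u v

theorem boxParam_eq_add_boxShift (hij : i ≠ j) (u v y : Fin m → ℝ) (s t : Bool) :
    boxParam (boxLower i j v s t) (boxUpper i j u s t) y =
      boxParam (boxLower i j v false false) (boxUpper i j u false false) y +
        (if s then boxShift i ((u, v), y) else 0) • Pi.single i 1 +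
        (if t then boxShift j ((u, v), y) else 0) • Pi.single j 1 := by
  ext k
  simp only [boxParam, boxLower, boxUpper, boxShift, Pi.add_apply, Pi.smul_apply, Pi.single_apply,
    smul_eq_mul]
  grind

theorem boxShift_nonneg (hq : q ∈ cornerPairs (Fin m)) {y : Fin m → ℝ} (hy : y ∈ Set.Icc 0 1)
    (k : Fin m) : 0 ≤ boxShift k (q, y) :=
  sub_nonneg.2 ((mul_nonpos_of_nonpos_of_nonneg (hq.2 k).le (sub_nonneg.2 (hy.2 k))).trans
    (mul_nonneg (hq.1 k).le (hy.1 k)))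

theorem setIntegral_boxShift (k : Fin m) (q : (Fin m → ℝ) × (Fin m → ℝ)) :
    ∫ y in Set.Icc 0 1, boxShift k (q, y) = (q.1 k - q.2 k) / 2 := by
  refine (setIntegral_unitCube_comp_eval k
    (f := fun t => q.1 k * t - q.2 k * (1 - t)) (by fun_prop)).trans ?_
  have hint : ∀ g : ℝ → ℝ, Continuous g → IntervalIntegrable g volume 0 1 := fun g hg =>
    hg.intervalIntegrable 0 1
  rw [integral_Icc_eq_integral_Ioc, ← intervalIntegral.integral_of_le zero_le_one,
    intervalIntegral.integral_sub (hint _ (by fun_prop)) (hint _ (by fun_prop)),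
    intervalIntegral.integral_const_mul, intervalIntegral.integral_const_mul,
    intervalIntegral.integral_sub (hint _ (by fun_prop)) (hint _ (by fun_prop)),
    integral_id, integral_one]
  ring

theorem setIntegral_boxShift_mul (hij : i ≠ j) (q : (Fin m → ℝ) × (Fin m → ℝ)) :
    ∫ y in Set.Icc 0 1, boxShift i (q, y) * boxShift j (q, y) =
      (∫ y in Set.Icc 0 1, boxShift i (q, y)) * ∫ y in Set.Icc 0 1, boxShift j (q, y) :=
  setIntegral_unitCube_mul hij (f := fun t => q.1 i * t - q.2 i * (1 - t))
    (g := fun t => q.1 j * t - q.2 j * (1 - t)) (by fun_prop) (by fun_prop)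

theorem isLittleO_boxMean_det (hij : i ≠ j) (hh : ContDiffAt ℝ 2 h 0) (h₀ : h 0 ≠ 0) :
    (fun q : (Fin m → ℝ) × (Fin m → ℝ) =>
        boxMean h i j q.1 q.2 true true * boxMean h i j q.1 q.2 false false -
        boxMean h i j q.1 q.2 false true * boxMean h i j q.1 q.2 true false -
        h 0 ^ 2 * logpd2 h i j 0 * ((q.1 i - q.2 i) / 2 * ((q.1 j - q.2 j) / 2)))
      =o[𝓝[cornerPairs (Fin m)] 0] fun q => (q.1 i - q.2 i) / 2 * ((q.1 j - q.2 j) / 2) := by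
  have hcube : volume.real (Set.Icc (0 : Fin m → ℝ) 1) = 1 := by
    simp [Measure.real, Real.volume_Icc_pi]
  have hshift : ∀ k : Fin m, Continuous (boxShift k) := fun k => by
    unfold boxShift
    fun_prop
  have hbase : Continuous fun z : ((Fin m → ℝ) × (Fin m → ℝ)) × (Fin m → ℝ) =>
      boxParam (boxLower i j z.1.2 false false) (boxUpper i j z.1.1 false false) z.2 := by
    refine continuous_pi fun k => ?_
    simp only [boxParam, boxLower, boxUpper]
    split_ifs <;> fun_prop
  have hdet := isLittleO_setIntegral_det (S := cornerPairs (Fin m)) (q₀ := 0)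
    (e := Pi.single i 1) (e' := Pi.single j 1) isCompact_Icc measurableSet_Icc hcube hh
    hbase (fun y _ => by ext k; simp [boxParam, boxLower, boxUpper])
    (hshift i) (fun y _ => by simp [boxShift]) (fun q hq y hy => boxShift_nonneg hq hy i)
    (hshift j) (fun y _ => by simp [boxShift]) (fun q hq y hy => boxShift_nonneg hq hy j)
    (setIntegral_boxShift_mul hij)
  simp only [setIntegral_boxShift, ← fderiv_fderiv_log_apply hh h₀] at hdet
  simpa [boxMean, logpd2, boxParam_eq_add_boxShift hij _ _ _ true,
    boxParam_eq_add_boxShift hij _ _ _ false true] using hdet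

theorem eventually_boxVol_mul_lt (hij : i ≠ j) (hh : ContDiffAt ℝ 2 h 0) (h₀ : 0 < h 0) :
    ∀ᶠ q : (Fin m → ℝ) × (Fin m → ℝ) in 𝓝[cornerPairs (Fin m)] 0,
      (0 < logpd2 h i j 0 →
        boxVol h i j q.1 q.2 false true * boxVol h i j q.1 q.2 true false <
          boxVol h i j q.1 q.2 true true * boxVol h i j q.1 q.2 false false) ∧
      (logpd2 h i j 0 < 0 →
        boxVol h i j q.1 q.2 true true * boxVol h i j q.1 q.2 false false <
          boxVol h i j q.1 q.2 false true * boxVol h i j q.1 q.2 true false) := by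
  have hsq : 0 < h 0 ^ 2 := pow_pos h₀ 2
  have hdet := isLittleO_boxMean_det hij hh h₀.ne'
  have hshift : ∀ᶠ q : (Fin m → ℝ) × (Fin m → ℝ) in 𝓝[cornerPairs (Fin m)] 0,
      0 < (q.1 i - q.2 i) / 2 * ((q.1 j - q.2 j) / 2) := by
    filter_upwards [self_mem_nhdsWithin] with q hq
    have hpos : ∀ k, 0 < q.1 k - q.2 k := fun k => sub_pos.2 ((hq.2 k).trans (hq.1 k))
    exact mul_pos (half_pos (hpos i)) (half_pos (hpos j))
  filter_upwards [self_mem_nhdsWithin,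
    eventually_imp_distrib_left.2 fun hκ => eventually_pos_of_isLittleO hdet hshift hκ,
    eventually_imp_distrib_left.2 fun hκ => eventually_neg_of_isLittleO hdet hshift hκ]
    with q hq hqpos hqneg
  obtain ⟨w, hw, hvol⟩ := exists_boxVol_det_eq_mul_boxMean_det i j h hq
  exact ⟨fun hκ => sub_pos.1 (hvol ▸ mul_pos hw (hqpos (mul_pos hsq hκ))),
    fun hκ => sub_neg.1 (hvol ▸ mul_neg_of_pos_of_neg hw (hqneg (mul_neg_of_pos_of_neg hsq hκ)))⟩

theorem exists_pos_of_eventually_cornerPairs {ι : Type*} [Finite ι]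
    {P : (ι → ℝ) × (ι → ℝ) → Prop} (hP : ∀ᶠ q in 𝓝[cornerPairs ι] 0, P q) :
    ∃ ε : ℝ, 0 < ε ∧ ∀ u v : ι → ℝ, (∀ k, 0 < u k) → (∀ k, u k < ε) → (∀ k, -ε < v k) →
      (∀ k, v k < 0) → P (u, v) := by
  have := Fintype.ofFinite ι
  obtain ⟨ε, hε, hball⟩ := Metric.mem_nhdsWithin_iff.1 hP
  refine ⟨ε, hε, fun u v hu huε hvε hv => hball ⟨?_, hu, hv⟩⟩
  rw [mem_ball_zero_iff, Prod.norm_mk, max_lt_iff, pi_norm_lt_iff hε, pi_norm_lt_iff hε]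
  exact ⟨fun k => abs_lt.2 ⟨(neg_neg_of_pos hε).trans (hu k), huε k⟩,
    fun k => abs_lt.2 ⟨hvε k, (hv k).trans hε⟩⟩

end Subbox

theorem stmt16_general {m : ℕ} {i j : Fin m} (hij : i ≠ j) {h : (Fin m → ℝ) → ℝ}
    (hh : ContDiffAt ℝ 2 h 0) (h₀ : 0 < h 0) :
    ∃ ε : ℝ, 0 < ε ∧ ∀ u v : Fin m → ℝ,
      (∀ k, 0 < u k) → (∀ k, u k < ε) → (∀ k, -ε < v k) → (∀ k, v k < 0) →
      (0 < logpd2 h i j 0 →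
        boxVol h i j u v false true * boxVol h i j u v true false <
          boxVol h i j u v true true * boxVol h i j u v false false) ∧
      (logpd2 h i j 0 < 0 →
        boxVol h i j u v true true * boxVol h i j u v false false <
          boxVol h i j u v false true * boxVol h i j u v true false) :=
  exists_pos_of_eventually_cornerPairs (eventually_boxVol_mul_lt hij hh h₀)

/-- Quantitative Tabachnikov criterion: if
`κ = ∂²(log h)/∂x_i∂x_j(0)` then for all sufficiently small boxes around `0` subdivided
by the hyperplanes `{x_i = 0}` and `{x_j = 0}` into pieces of `h`-volumes
`a = V_{−+}, b = V_{++}, c = V_{+−}, d = V_{−−}`, one has `ac < bd` when `κ > 0`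
and `ac > bd` when `κ < 0`. -/
theorem stmt16 {m : ℕ} (hm : 2 ≤ m) (i j : Fin m) (hij : i ≠ j)
    (h : (Fin m → ℝ) → ℝ)
    (V : Set (Fin m → ℝ)) (hV : IsOpen V) (h0V : (0 : Fin m → ℝ) ∈ V)
    (hsm : ContDiffOn ℝ (⊤ : ℕ∞) h V) (hpos : ∀ x ∈ V, 0 < h x) :
    ∃ ε : ℝ, 0 < ε ∧ ∀ u v : Fin m → ℝ,
      (∀ k, 0 < u k) → (∀ k, u k < ε) → (∀ k, -ε < v k) → (∀ k, v k < 0) →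
      (0 < logpd2 h i j 0 →
        boxVol h i j u v false true * boxVol h i j u v true false <
          boxVol h i j u v true true * boxVol h i j u v false false) ∧
      (logpd2 h i j 0 < 0 →
        boxVol h i j u v true true * boxVol h i j u v false false <
          boxVol h i j u v false true * boxVol h i j u v true false) :=
  stmt16_general hij ((hsm.contDiffAt (hV.mem_nhds h0V)).of_le ENat.LEInfty.out)
    (hpos 0 h0V)
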